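/- Let n ≥ 1, 0 < 2s < n, and let w ∈ L^∞(ℝⁿ) ∩ L¹(ℝⁿ) with Riesz potential v(x) = c_{n,s} ∫_{ℝⁿ} w(y)|x-y|^{2s-n} dy. Suppose v ∈ L^∞(ℝⁿ). Write s = m + γ with m ∈ ℕ and γ ∈ [0,1). If 0 < 2γ ≤ 1, then for every α ∈ (0, 2γ), v ∈ C^{2m,α}(ℝⁿ) with ‖v‖_{C^{2m,α}(ℝⁿ)} ≤ C(n,s,α)(‖v‖_{L^∞(ℝⁿ)} + ‖w‖_{L^∞(ℝⁿ)}). -/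

import Mathlib

open MeasureTheory

namespace Riesz

section conv
variable {n : ℕ}

/-- Convolution of a scalar function with a vector-valued one. -/
noncomputable def cv {F : Type} [NormedAddCommGroup F] [NormedSpace ℝ F]
    (w : EuclideanSpace ℝ (Fin n) → ℝ) (g : EuclideanSpace ℝ (Fin n) → F)
    (x : EuclideanSpace ℝ (Fin n)) : F := ∫ y, w y • g (x - y)

theorem cv_integrand {F : Type} [NormedAddCommGroup F] [NormedSpace ℝ F]
    {w : EuclideanSpace ℝ (Fin n) → ℝ} {g : EuclideanSpace ℝ (Fin n) → F}
    (hw : Integrable w) (hg : Continuous g) (hc : HasCompactSupport g)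
    (x : EuclideanSpace ℝ (Fin n)) : Integrable (fun y => w y • g (x - y)) := by
  obtain ⟨B, hB⟩ := hg.bounded_above_of_compact_support hc
  refine (hw.norm.mul_const B).mono' (hw.aestronglyMeasurable.smul
    (hg.comp (by fun_prop : Continuous fun y => x - y)).aestronglyMeasurable) ?_
  refine Filter.Eventually.of_forall fun y => ?_
  rw [norm_smul]
  exact mul_le_mul_of_nonneg_left (hB _) (norm_nonneg _)

theorem cv_hasFDerivAt {F : Type} [NormedAddCommGroup F] [NormedSpace ℝ F]
    {w : EuclideanSpace ℝ (Fin n) → ℝ} {g : EuclideanSpace ℝ (Fin n) → F}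
    (hw : Integrable w) (hg : ContDiff ℝ 1 g) (hc : HasCompactSupport g)
    (x : EuclideanSpace ℝ (Fin n)) :
    HasFDerivAt (cv w g) (cv w (fderiv ℝ g) x) x := by
  have hg' : Continuous (fderiv ℝ g) := hg.continuous_fderiv (by norm_num)
  have hc' : HasCompactSupport (fderiv ℝ g) := hc.fderiv (𝕜 := ℝ)
  obtain ⟨B, hB⟩ := hg'.bounded_above_of_compact_support hc'
  refine hasFDerivAt_integral_of_dominated_of_fderiv_le (𝕜 := ℝ) (s := Set.univ)
    (F := fun x y => w y • g (x - y)) (F' := fun x y => w y • fderiv ℝ g (x - y))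
    (bound := fun y => |w y| * B) Filter.univ_mem ?_ ?_ ?_ ?_ ?_ ?_
  · exact Filter.Eventually.of_forall fun z =>
      (cv_integrand hw hg.continuous hc z).aestronglyMeasurable
  · exact cv_integrand hw hg.continuous hc x
  · exact (cv_integrand hw hg' hc' x).aestronglyMeasurable
  · refine Filter.Eventually.of_forall fun y z _ => ?_
    rw [norm_smul, Real.norm_eq_abs]
    exact mul_le_mul_of_nonneg_left (hB _) (abs_nonneg _)
  · exact hw.abs.mul_const B
  · refine Filter.Eventually.of_forall fun y z _ => ?_
    have h1 : HasFDerivAt g (fderiv ℝ g (z - y)) (z - y) :=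
      (hg.differentiable (by norm_num) _).hasFDerivAt
    have h2 : HasFDerivAt (fun z => g (z - y)) (fderiv ℝ g (z - y)) z := by
      have := h1.comp z ((hasFDerivAt_id z).sub_const y)
      rw [ContinuousLinearMap.comp_id] at this
      exact this
    exact h2.const_smul (w y)

theorem cv_contDiff (w : EuclideanSpace ℝ (Fin n) → ℝ) (hw : Integrable w) (N : ℕ) :
    ∀ {F : Type} [NormedAddCommGroup F] [NormedSpace ℝ F]
    {g : EuclideanSpace ℝ (Fin n) → F} (_ : ∀ k : ℕ, ContDiff ℝ k g) (_ : HasCompactSupport g),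
    ContDiff ℝ N (cv w g) := by
  induction N with
  | zero =>
    intro F _ _ g hg hc
    refine contDiff_zero.2 ?_
    exact continuous_iff_continuousAt.2 fun x => (cv_hasFDerivAt hw (by exact_mod_cast hg 1) hc x).continuousAt
  | succ N ih =>
    intro F _ _ g hg hc
    have hd := fun x => cv_hasFDerivAt hw (by exact_mod_cast hg 1) hc x
    have e : fderiv ℝ (cv w g) = cv w (fderiv ℝ g) := funext fun x => (hd x).fderiv
    push_cast
    rw [contDiff_succ_iff_fderiv]
    refine ⟨fun x => (hd x).differentiableAt, by simp, ?_⟩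
    rw [e]
    refine ih (fun k => ?_) (hc.fderiv (𝕜 := ℝ))
    exact (hg (k+1)).fderiv_right (by push_cast; exact le_rfl)

theorem cv_norm_iter (w : EuclideanSpace ℝ (Fin n) → ℝ) (hw : Integrable w) (N : ℕ) :
    ∀ {F : Type} [NormedAddCommGroup F] [NormedSpace ℝ F]
    {g : EuclideanSpace ℝ (Fin n) → F} (_ : ∀ k : ℕ, ContDiff ℝ k g) (_ : HasCompactSupport g)
    (x : EuclideanSpace ℝ (Fin n)),
    ‖iteratedFDeriv ℝ N (cv w g) x‖ ≤ ∫ y, |w y| * ‖iteratedFDeriv ℝ N g (x - y)‖ := by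
  induction N with
  | zero =>
    intro F _ _ g hg hc x
    simp only [norm_iteratedFDeriv_zero]
    refine (norm_integral_le_integral_norm _).trans (le_of_eq ?_)
    simp [norm_smul]
  | succ N ih =>
    intro F _ _ g hg hc x
    have hd := fun x => cv_hasFDerivAt hw (by exact_mod_cast hg 1) hc x
    have e : fderiv ℝ (cv w g) = cv w (fderiv ℝ g) := funext fun x => (hd x).fderiv
    simp only [← norm_iteratedFDeriv_fderiv]
    rw [e]
    refine ih (fun k => ?_) (hc.fderiv (𝕜 := ℝ)) x
    exact (hg (k+1)).fderiv_right (by push_cast; exact le_rfl)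

/-- rescaled kernel -/
noncomputable def sc (ψ : EuclideanSpace ℝ (Fin n) → ℝ) (p r : ℝ)
    (z : EuclideanSpace ℝ (Fin n)) : ℝ := r ^ p * ψ (r⁻¹ • z)

theorem sc_contDiff {ψ : EuclideanSpace ℝ (Fin n) → ℝ} (hψ : ∀ k : ℕ, ContDiff ℝ k ψ) (p r : ℝ)
    (k : ℕ) : ContDiff ℝ k (sc ψ p r) :=
  contDiff_const.mul ((hψ k).comp (contDiff_const_smul _))

theorem sc_compact {ψ : EuclideanSpace ℝ (Fin n) → ℝ} (hψ : HasCompactSupport ψ) (p : ℝ) {r : ℝ}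
    (hr : 0 < r) : HasCompactSupport (sc ψ p r) :=
  (hψ.comp_smul (inv_ne_zero hr.ne')).mul_left

theorem sc_norm_iter {ψ : EuclideanSpace ℝ (Fin n) → ℝ} (hψ : ∀ k : ℕ, ContDiff ℝ k ψ) (p : ℝ)
    {r : ℝ} (hr : 0 < r) (k : ℕ) (z : EuclideanSpace ℝ (Fin n)) :
    ‖iteratedFDeriv ℝ k (sc ψ p r) z‖ = r ^ (p - k) * ‖iteratedFDeriv ℝ k ψ (r⁻¹ • z)‖ := by
  have h1 : sc ψ p r = fun z => r ^ p • ψ (r⁻¹ • z) := rfl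
  have h2 : ContDiff ℝ k fun z : EuclideanSpace ℝ (Fin n) => ψ (r⁻¹ • z) :=
    (hψ k).comp (contDiff_const_smul _)
  rw [h1, iteratedFDeriv_const_smul_apply' h2.contDiffAt,
    iteratedFDeriv_comp_const_smul _ (hψ k)]
  simp only [norm_smul]
  rw [Real.norm_of_nonneg (Real.rpow_nonneg hr.le _), Real.norm_of_nonneg (by positivity),
    Real.rpow_sub hr, Real.rpow_natCast, inv_pow, ← mul_assoc]
  rfl

theorem piece_bounds {ψ : EuclideanSpace ℝ (Fin n) → ℝ} (hψ : ∀ k : ℕ, ContDiff ℝ k ψ)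
    (hc : HasCompactSupport ψ) (p : ℝ) (k : ℕ) :
    ∃ A : ℝ, 0 ≤ A ∧ ∀ (w : EuclideanSpace ℝ (Fin n) → ℝ) (Mw : ℝ), Integrable w →
      (∀ x, |w x| ≤ Mw) → ∀ r : ℝ, 0 < r → ∀ x,
      ∫ y, |w y| * ‖iteratedFDeriv ℝ k (sc ψ p r) (x - y)‖ ≤ A * r ^ (p + n - k) * Mw ∧
      ∫ y, |w y| * ‖iteratedFDeriv ℝ k (sc ψ p r) (x - y)‖ ≤ A * r ^ (p - k) * ∫ y, |w y| := by
  have hcont : Continuous (iteratedFDeriv ℝ k ψ) := (hψ k).continuous_iteratedFDeriv le_rfl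
  have hcc : HasCompactSupport (iteratedFDeriv ℝ k ψ) := hc.iteratedFDeriv k
  obtain ⟨B, hB⟩ := hcont.bounded_above_of_compact_support hcc
  have hB0 : 0 ≤ B := (norm_nonneg _).trans (hB 0)
  set I := ∫ z, ‖iteratedFDeriv ℝ k ψ z‖ with hI
  have hI0 : 0 ≤ I := integral_nonneg fun _ => norm_nonneg _
  refine ⟨I + B, by positivity, fun w Mw hw hM r hr x => ⟨?_, ?_⟩⟩
  · have hMw : 0 ≤ Mw := (abs_nonneg _).trans (hM 0)
    have hint : Integrable fun y => ‖iteratedFDeriv ℝ k ψ (r⁻¹ • y)‖ := by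
      have := (hcont.norm.integrable_of_hasCompactSupport hcc.norm (μ := volume))
      exact this.comp_smul (inv_ne_zero hr.ne')
    have hint2 : Integrable fun y => ‖iteratedFDeriv ℝ k ψ (r⁻¹ • (x - y))‖ :=
      hint.comp_sub_left x
    calc _ ≤ ∫ y, Mw * (r ^ (p - k) * ‖iteratedFDeriv ℝ k ψ (r⁻¹ • (x - y))‖) := by
          refine integral_mono_of_nonneg (Filter.Eventually.of_forall fun y => by positivity)
            ((hint2.const_mul _).const_mul _) (Filter.Eventually.of_forall fun y => ?_)
          simp only [sc_norm_iter hψ p hr]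
          gcongr
          exact hM y
      _ = I * r ^ (p + n - k) * Mw := by
          rw [integral_const_mul, integral_const_mul,
            integral_sub_left_eq_self (fun y => ‖iteratedFDeriv ℝ k ψ (r⁻¹ • y)‖) volume x,
            Measure.integral_comp_inv_smul_of_nonneg volume (fun y => ‖iteratedFDeriv ℝ k ψ y‖) hr.le,
            ← hI]
          have : r ^ (p + n - k) = r ^ (p - k) * r ^ n := by
            rw [← Real.rpow_natCast r n, ← Real.rpow_add hr]; ring_nf
          rw [this]
          simp only [finrank_euclideanSpace, Fintype.card_fin, smul_eq_mul]
          ring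
      _ ≤ _ := by
          have : 0 ≤ r ^ (p + n - k) := Real.rpow_nonneg hr.le _
          gcongr
          linarith
  · calc _ ≤ ∫ y, (B * r ^ (p - k)) * |w y| := by
          refine integral_mono_of_nonneg (Filter.Eventually.of_forall fun y => by positivity)
            (hw.abs.const_mul _) (Filter.Eventually.of_forall fun y => ?_)
          simp only [sc_norm_iter hψ p hr]
          have h1 : 0 ≤ r ^ (p - k) := Real.rpow_nonneg hr.le _
          have := mul_le_mul_of_nonneg_left (hB (r⁻¹ • (x - y))) (mul_nonneg (abs_nonneg (w y)) h1)
          nlinarith [this]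
      _ = B * r ^ (p - k) * ∫ y, |w y| := integral_const_mul _ _
      _ ≤ _ := by
          have : 0 ≤ r ^ (p - k) := Real.rpow_nonneg hr.le _
          have : 0 ≤ ∫ y, |w y| := integral_nonneg fun _ => abs_nonneg _
          gcongr
          linarith

end conv

section interp
variable {E : Type} [NormedAddCommGroup E] [NormedSpace ℝ E]

theorem iter_lip {F : E → ℝ} {k : ℕ} (hF : ContDiff ℝ (k + 1 : ℕ) F) {b : ℝ}
    (hb : ∀ x, ‖iteratedFDeriv ℝ (k + 1) F x‖ ≤ b) (x y : E) :
    ‖iteratedFDeriv ℝ k F x - iteratedFDeriv ℝ k F y‖ ≤ b * ‖x - y‖ := by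
  refine Convex.norm_image_sub_le_of_norm_fderiv_le (𝕜 := ℝ) (s := Set.univ) ?_ ?_ convex_univ
    (Set.mem_univ _) (Set.mem_univ _)
  · intro z _
    exact hF.differentiable_iteratedFDeriv (by exact_mod_cast Nat.lt_succ_self k) z
  · intro z _
    rw [norm_fderiv_iteratedFDeriv]
    exact hb z

theorem landau_step {F : E → ℝ} {k : ℕ} (hF : ContDiff ℝ (k + 2 : ℕ) F) {a b h : ℝ}
    (ha : ∀ x, ‖iteratedFDeriv ℝ k F x‖ ≤ a)
    (hb : ∀ x, ‖iteratedFDeriv ℝ (k + 2) F x‖ ≤ b) (hh : 0 < h) (x : E) :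
    ‖iteratedFDeriv ℝ (k + 1) F x‖ ≤ 2 / h * a + h * b := by
  have ha0 : 0 ≤ a := (norm_nonneg _).trans (ha 0)
  have hb0 : 0 ≤ b := (norm_nonneg _).trans (hb 0)
  rw [← norm_fderiv_iteratedFDeriv]
  refine ContinuousLinearMap.opNorm_le_bound _ (by positivity) fun e => ?_
  rcases eq_or_ne e 0 with rfl | he
  · simp
  have hne : 0 < ‖e‖ := norm_pos_iff.2 he
  set t := h / ‖e‖ with ht
  have ht0 : 0 < t := by positivity
  have hte : ‖t • e‖ = h := by
    rw [norm_smul, Real.norm_of_nonneg ht0.le, ht]; field_simp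
  have key : ‖iteratedFDeriv ℝ k F (x + t • e) - iteratedFDeriv ℝ k F x -
      fderiv ℝ (iteratedFDeriv ℝ k F) x (x + t • e - x)‖ ≤ (b * h) * ‖x + t • e - x‖ := by
    refine Convex.norm_image_sub_le_of_norm_fderiv_le' (𝕜 := ℝ) (s := Metric.closedBall x h) ?_ ?_
      (convex_closedBall _ _) (Metric.mem_closedBall_self hh.le) ?_
    · intro z _
      exact hF.differentiable_iteratedFDeriv (by exact_mod_cast (by omega : k < k + 2)) z
    · intro z hz
      rw [fderiv_iteratedFDeriv]
      simp only [Function.comp_apply]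
      rw [← dist_eq_norm, LinearIsometryEquiv.dist_map, dist_eq_norm]
      refine (iter_lip (k := k + 1) hF hb z x).trans ?_
      rw [Metric.mem_closedBall, dist_eq_norm] at hz
      gcongr
    · rw [Metric.mem_closedBall, dist_eq_norm, add_sub_cancel_left, hte]
  rw [add_sub_cancel_left, hte, map_smul] at key
  have h3 := norm_sub_norm_le (t • fderiv ℝ (iteratedFDeriv ℝ k F) x e)
    (iteratedFDeriv ℝ k F (x + t • e) - iteratedFDeriv ℝ k F x)
  rw [norm_sub_rev (t • _) _] at h3
  have h4 := norm_sub_le (iteratedFDeriv ℝ k F (x + t • e)) (iteratedFDeriv ℝ k F x)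
  have h5 : t * ‖fderiv ℝ (iteratedFDeriv ℝ k F) x e‖ ≤ 2 * a + b * h * h := by
    rw [norm_smul, Real.norm_of_nonneg ht0.le] at h3
    linarith [ha x, ha (x + t • e)]
  have h6 : (2 / h * a + h * b) * ‖e‖ = (2 * a + b * h * h) / t := by
    rw [ht]; field_simp
  rw [h6, le_div_iff₀ ht0]
  linarith

theorem seq_step (k : ℕ) : ∀ h : ℝ, 0 < h → ∃ C : ℝ, 0 ≤ C ∧ ∀ a : ℕ → ℝ, (∀ i, 0 ≤ a i) →
    (∀ i, ∀ h : ℝ, 0 < h → a (i + 1) ≤ 2 / h * a i + h * a (i + 2)) →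
    a k ≤ C * a 0 + h * a (k + 1) := by
  induction k with
  | zero =>
    intro h hh
    refine ⟨1, zero_le_one, fun a ha _ => ?_⟩
    have := mul_nonneg hh.le (ha 1)
    simpa using this
  | succ k ih =>
    intro h hh
    obtain ⟨C, hC, H⟩ := ih (h / 2 / 4) (by positivity)
    refine ⟨2 * (2 / (h / 2) * C), by positivity, fun a ha hs => ?_⟩
    have h1 := H a ha hs
    have h2 := hs k (h / 2) (by positivity)
    have h3 := mul_le_mul_of_nonneg_left h1 (by positivity : 0 ≤ 2 / (h / 2))
    have h4 : 2 / (h / 2) * (C * a 0 + h / 2 / 4 * a (k + 1)) =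
      2 / (h / 2) * C * a 0 + a (k + 1) / 2 := by field_simp; ring
    rw [h4] at h3
    linarith

theorem seq_interp (N : ℕ) : ∃ C : ℝ, 0 ≤ C ∧ ∀ a : ℕ → ℝ, (∀ i, 0 ≤ a i) →
    (∀ i, ∀ h : ℝ, 0 < h → a (i + 1) ≤ 2 / h * a i + h * a (i + 2)) →
    ∀ k ≤ N, a k ≤ C * a 0 + a N := by
  induction N with
  | zero =>
    refine ⟨0, le_rfl, fun a ha _ k hk => ?_⟩
    obtain rfl : k = 0 := by omega
    simp
  | succ N ih =>
    obtain ⟨C, hC, H⟩ := ih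
    obtain ⟨D, hD, H'⟩ := seq_step N 1 one_pos
    refine ⟨C + D, by positivity, fun a ha hs k hk => ?_⟩
    rcases Nat.lt_or_ge N k with h | h
    · obtain rfl : k = N + 1 := by omega
      have := mul_nonneg (add_nonneg hC hD) (ha 0)
      linarith
    · have h1 := H a ha hs k h
      have h2 := H' a ha hs
      linarith

theorem landau (N : ℕ) : ∃ C : ℝ, 0 ≤ C ∧ ∀ F : E → ℝ, (∀ k : ℕ, ContDiff ℝ k F) →
    (∀ k : ℕ, ∃ b, ∀ x, ‖iteratedFDeriv ℝ k F x‖ ≤ b) → ∀ A B : ℝ,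
    (∀ x, |F x| ≤ A) → (∀ x, ‖iteratedFDeriv ℝ N F x‖ ≤ B) →
    ∀ k ≤ N, ∀ x, ‖iteratedFDeriv ℝ k F x‖ ≤ C * A + B := by
  obtain ⟨C, hC, H⟩ := seq_interp N
  refine ⟨C, hC, fun F hF hb A B hA hB k hk x => ?_⟩
  have bdd : ∀ k : ℕ, BddAbove (Set.range fun x => ‖iteratedFDeriv ℝ k F x‖) := by
    intro k
    obtain ⟨b, hb⟩ := hb k
    exact ⟨b, by rintro _ ⟨x, rfl⟩; exact hb x⟩
  set a : ℕ → ℝ := fun k => ⨆ x, ‖iteratedFDeriv ℝ k F x‖ with ha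
  have hle : ∀ k x, ‖iteratedFDeriv ℝ k F x‖ ≤ a k := fun k x => le_ciSup (bdd k) x
  have h0 : a 0 ≤ A := ciSup_le fun x => by simpa using hA x
  have hN : a N ≤ B := ciSup_le hB
  have := H a (fun i => (norm_nonneg _).trans (hle i 0))
    (fun i h hh => ciSup_le fun x => landau_step (hF _) (hle i) (hle (i + 2)) hh x) k hk
  have h1 := mul_le_mul_of_nonneg_left h0 hC
  linarith [hle k x]

end interp

section kernel
variable {n : ℕ}

/-- The dyadic piece of the kernel. -/
noncomputable def psi (φ : EuclideanSpace ℝ (Fin n) → ℝ) (p : ℝ)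
    (z : EuclideanSpace ℝ (Fin n)) : ℝ := (φ z - φ ((2 : ℝ) • z)) * ‖z‖ ^ p

theorem exists_cutoff : ∃ φ : EuclideanSpace ℝ (Fin n) → ℝ, (∀ k : ℕ, ContDiff ℝ k φ) ∧
    HasCompactSupport φ ∧ (∀ x, ‖x‖ ≤ 1 → φ x = 1) ∧ (∀ x, 2 ≤ ‖x‖ → φ x = 0) ∧
    (∀ x, 0 ≤ φ x) ∧ (∀ x, φ x ≤ 1) := by
  let φ : ContDiffBump (0 : EuclideanSpace ℝ (Fin n)) := ⟨1, 2, one_pos, one_lt_two⟩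
  refine ⟨φ, fun k => φ.contDiff, φ.hasCompactSupport, fun x hx => ?_, fun x hx => ?_,
    fun x => φ.nonneg, fun x => φ.le_one⟩
  · exact φ.one_of_mem_closedBall (by simpa using hx)
  · exact φ.zero_of_le_dist (by simpa using hx)

theorem psi_compact {φ : EuclideanSpace ℝ (Fin n) → ℝ} (hc : HasCompactSupport φ) (p : ℝ) :
    HasCompactSupport (psi φ p) := by
  have h2 : HasCompactSupport fun z => φ ((2 : ℝ) • z) := hc.comp_smul two_ne_zero
  exact (hc.sub h2).mul_right

theorem psi_contDiff {φ : EuclideanSpace ℝ (Fin n) → ℝ} (hφ : ∀ k : ℕ, ContDiff ℝ k φ)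
    (h1 : ∀ x, ‖x‖ ≤ 1 → φ x = 1) (p : ℝ) (k : ℕ) : ContDiff ℝ k (psi φ p) := by
  rw [contDiff_iff_contDiffAt]
  intro x
  rcases eq_or_ne x 0 with rfl | hx
  · have : psi φ p =ᶠ[nhds 0] fun _ => 0 := by
      filter_upwards [Metric.ball_mem_nhds (0 : EuclideanSpace ℝ (Fin n)) (by norm_num : (0:ℝ) < 1 / 2)]
        with z hz
      rw [mem_ball_zero_iff] at hz
      have a1 : φ z = 1 := h1 z (by linarith)
      have a2 : φ ((2 : ℝ) • z) = 1 := h1 _ (by rw [norm_smul]; norm_num; linarith)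
      simp [psi, a1, a2]
    exact contDiffAt_const.congr_of_eventuallyEq this
  · refine ContDiffAt.mul ?_ ?_
    · exact ((hφ k).sub ((hφ k).comp (contDiff_const_smul _))).contDiffAt
    · exact (contDiffAt_norm ℝ hx).rpow_const_of_ne (norm_ne_zero_iff.2 hx)

theorem sc_psi (φ : EuclideanSpace ℝ (Fin n) → ℝ) (p : ℝ) {r : ℝ} (hr : 0 < r)
    (z : EuclideanSpace ℝ (Fin n)) :
    sc (psi φ p) p r z = (φ (r⁻¹ • z) - φ ((2 * r⁻¹) • z)) * ‖z‖ ^ p := by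
  unfold sc psi
  rw [norm_smul, Real.norm_of_nonneg (by positivity), smul_smul,
    Real.mul_rpow (by positivity) (norm_nonneg _), Real.inv_rpow hr.le]
  have : r ^ p ≠ 0 := (Real.rpow_pos_of_pos hr p).ne'
  field_simp

theorem psi_nonneg {φ : EuclideanSpace ℝ (Fin n) → ℝ}
    (h1 : ∀ x, ‖x‖ ≤ 1 → φ x = 1) (h2 : ∀ x, 2 ≤ ‖x‖ → φ x = 0)
    (h3 : ∀ x, 0 ≤ φ x) (h4 : ∀ x, φ x ≤ 1) (p : ℝ) (z : EuclideanSpace ℝ (Fin n)) :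
    0 ≤ psi φ p z := by
  refine mul_nonneg ?_ (Real.rpow_nonneg (norm_nonneg _) _)
  rcases le_total ‖z‖ 1 with h | h
  · rw [h1 z h]; linarith [h4 ((2 : ℝ) • z)]
  · rw [h2 ((2 : ℝ) • z) (by rw [norm_smul]; norm_num; linarith)]
    linarith [h3 z]

theorem hasSum_kernel {φ : EuclideanSpace ℝ (Fin n) → ℝ} (hφ : Continuous φ)
    (h1 : ∀ x, ‖x‖ ≤ 1 → φ x = 1) (h2 : ∀ x, 2 ≤ ‖x‖ → φ x = 0)
    (h3 : ∀ x, 0 ≤ φ x) (h4 : ∀ x, φ x ≤ 1) {p : ℝ} (hp : p ≠ 0)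
    (z : EuclideanSpace ℝ (Fin n)) :
    HasSum (fun j : ℤ => sc (psi φ p) p ((2 : ℝ) ^ (-j)) z) (‖z‖ ^ p) := by
  have hnn : ∀ r : ℝ, 0 < r → 0 ≤ sc (psi φ p) p r z := fun r hr =>
    mul_nonneg (Real.rpow_nonneg hr.le _) (psi_nonneg h1 h2 h3 h4 p _)
  have hr : ∀ j : ℤ, 0 < (2 : ℝ) ^ j := fun j => by positivity
  have A : HasSum (fun j : ℕ => sc (psi φ p) p ((2 : ℝ) ^ (-(j : ℤ))) z) (φ z * ‖z‖ ^ p) := by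
    rw [hasSum_iff_tendsto_nat_of_nonneg (fun j => hnn _ (hr _))]
    have e : ∀ N : ℕ, ∑ j ∈ Finset.range N, sc (psi φ p) p ((2 : ℝ) ^ (-(j : ℤ))) z =
        φ z * ‖z‖ ^ p - φ ((2 : ℝ) ^ N • z) * ‖z‖ ^ p := by
      intro N
      induction N with
      | zero => simp
      | succ N ih =>
        rw [Finset.sum_range_succ, ih, sc_psi _ _ (hr _), zpow_neg, inv_inv, zpow_natCast, pow_succ']
        ring
    simp_rw [e]
    rcases eq_or_ne z 0 with rfl | hz
    · simp [Real.zero_rpow hp]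
    have hzn : 0 < ‖z‖ := norm_pos_iff.2 hz
    have ht : Filter.Tendsto (fun N : ℕ => (2 : ℝ) ^ N * ‖z‖) Filter.atTop Filter.atTop :=
      (tendsto_pow_atTop_atTop_of_one_lt one_lt_two).atTop_mul_const hzn
    refine tendsto_const_nhds.congr' ?_
    filter_upwards [ht.eventually_ge_atTop 2] with N hN
    rw [h2 ((2 : ℝ) ^ N • z) (by rw [norm_smul, Real.norm_of_nonneg (by positivity)]; exact hN),
      zero_mul, sub_zero]
  have B : HasSum (fun j : ℕ => sc (psi φ p) p ((2 : ℝ) ^ (-(-((j : ℤ) + 1)))) z)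
      (‖z‖ ^ p - φ z * ‖z‖ ^ p) := by
    rw [hasSum_iff_tendsto_nat_of_nonneg (fun j => hnn _ (hr _))]
    have e : ∀ N : ℕ, ∑ j ∈ Finset.range N, sc (psi φ p) p ((2 : ℝ) ^ (-(-((j : ℤ) + 1)))) z =
        φ ((2⁻¹ : ℝ) ^ N • z) * ‖z‖ ^ p - φ z * ‖z‖ ^ p := by
      intro N
      induction N with
      | zero => simp
      | succ N ih =>
        rw [Finset.sum_range_succ, ih, sc_psi _ _ (hr _)]
        have q1 : ((2 : ℝ) ^ (-(-((N : ℤ) + 1))))⁻¹ = 2⁻¹ ^ (N + 1) := by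
          rw [neg_neg, inv_pow]; norm_cast
        have q2 : (2 : ℝ) * 2⁻¹ ^ (N + 1) = 2⁻¹ ^ N := by rw [pow_succ]; ring
        rw [q1, q2]
        ring
    simp_rw [e]
    have t1 : Filter.Tendsto (fun N : ℕ => (2⁻¹ : ℝ) ^ N • z) Filter.atTop (nhds ((0 : ℝ) • z)) :=
      (tendsto_pow_atTop_nhds_zero_of_lt_one (by norm_num) (by norm_num)).smul_const z
    have t2 := (hφ.tendsto _).comp t1
    rw [zero_smul, h1 0 (by simp)] at t2
    have t3 := (t2.mul_const (‖z‖ ^ p)).sub_const (φ z * ‖z‖ ^ p)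
    rw [one_mul] at t3
    exact t3
  have := HasSum.of_nat_of_neg_add_one
    (f := fun j : ℤ => sc (psi φ p) p ((2 : ℝ) ^ (-j)) z) A B
  rwa [add_sub_cancel] at this

theorem scale_near (q : ℝ) (j : ℕ) : ((2 : ℝ) ^ (-(j : ℤ))) ^ q = ((2 : ℝ) ^ (-q)) ^ j := by
  rw [← Real.rpow_intCast, ← Real.rpow_mul (by norm_num), ← Real.rpow_natCast,
    ← Real.rpow_mul (by norm_num)]
  push_cast; ring_nf

theorem scale_far (q : ℝ) (j : ℕ) :
    ((2 : ℝ) ^ (-(-((j : ℤ) + 1)))) ^ q = (2 : ℝ) ^ q * ((2 : ℝ) ^ q) ^ j := by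
  rw [← Real.rpow_intCast, ← Real.rpow_mul (by norm_num), ← Real.rpow_natCast,
    ← Real.rpow_mul (by norm_num), ← Real.rpow_add (by norm_num)]
  push_cast; ring_nf

theorem summable_near {q : ℝ} (hq : 0 < q) :
    Summable fun j : ℕ => ((2 : ℝ) ^ (-(j : ℤ))) ^ q := by
  simp_rw [scale_near]
  refine summable_geometric_of_lt_one (by positivity) ?_
  exact Real.rpow_lt_one_of_one_lt_of_neg one_lt_two (by linarith)

theorem summable_far {q : ℝ} (hq : q < 0) :
    Summable fun j : ℕ => ((2 : ℝ) ^ (-(-((j : ℤ) + 1)))) ^ q := by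
  simp_rw [scale_far]
  refine (summable_geometric_of_lt_one (by positivity) ?_).mul_left _
  exact Real.rpow_lt_one_of_one_lt_of_neg one_lt_two hq

end kernel

section parts
variable {n : ℕ}

theorem holder_real {a A B M r d g α : ℝ} (hA : 0 ≤ A) (hB : 0 ≤ B) (hM : 0 ≤ M) (hr : 0 < r)
    (hd : 0 ≤ d) (hα : 0 < α) (hα1 : α < 1) (h1 : a ≤ 2 * (A * r ^ g * M))
    (h2 : a ≤ B * r ^ (g - 1) * M * d) : a ≤ (2 * A + B) * r ^ (g - α) * (M * d ^ α) := by
  have hX : 0 ≤ r ^ (g - α) * d ^ α * M := by positivity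
  rcases le_total d r with h | h
  · have e : r ^ (g - 1) * d ≤ r ^ (g - α) * d ^ α := by
      have e1 : d ≤ d ^ α * r ^ (1 - α) := by
        calc d = d ^ α * d ^ (1 - α) := by
              rw [← Real.rpow_add_of_nonneg hd hα.le (by linarith)]; simp
          _ ≤ _ := by gcongr
      calc r ^ (g - 1) * d ≤ r ^ (g - 1) * (d ^ α * r ^ (1 - α)) := by gcongr
        _ = (r ^ (g - 1) * r ^ (1 - α)) * d ^ α := by ring
        _ = _ := by rw [← Real.rpow_add hr]; ring_nf
    have := mul_le_mul_of_nonneg_left e (mul_nonneg hB hM)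
    nlinarith [mul_nonneg hA hX]
  · have e : r ^ g ≤ r ^ (g - α) * d ^ α := by
      calc r ^ g = r ^ (g - α) * r ^ α := by rw [← Real.rpow_add hr]; ring_nf
        _ ≤ _ := by gcongr
    have := mul_le_mul_of_nonneg_left e (mul_nonneg hA hM)
    nlinarith [mul_nonneg hB hX]

theorem near_part {ψ : EuclideanSpace ℝ (Fin n) → ℝ} (hψ : ∀ k : ℕ, ContDiff ℝ k ψ)
    (hc : HasCompactSupport ψ) (p γ α : ℝ) (m : ℕ) (hp : p + n = 2 * m + 2 * γ)
    (hα : 0 < α) (hα1 : α < 1) (hαγ : α < 2 * γ) :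
    ∃ C : ℝ, 0 ≤ C ∧ ∀ (w : EuclideanSpace ℝ (Fin n) → ℝ) (Mw : ℝ), Integrable w →
      (∀ x, |w x| ≤ Mw) → ∀ f : EuclideanSpace ℝ (Fin n) → ℝ,
      (f = fun x => ∑' j : ℕ, cv w (sc ψ p ((2 : ℝ) ^ (-(j : ℤ)))) x) →
      ContDiff ℝ (2 * m : ℕ) f ∧ (∀ k ≤ 2 * m, ∀ x, ‖iteratedFDeriv ℝ k f x‖ ≤ C * Mw) ∧
      ∀ x y, ‖iteratedFDeriv ℝ (2 * m) f x - iteratedFDeriv ℝ (2 * m) f y‖ ≤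
        C * Mw * ‖x - y‖ ^ α := by
  choose A hA0 hA using fun k => piece_bounds hψ hc p k
  set S : ℝ → ℝ := fun q => ∑' j : ℕ, ((2 : ℝ) ^ (-(j : ℤ))) ^ q with hS
  have hS0 : ∀ q, 0 ≤ S q := fun q => tsum_nonneg fun j => by positivity
  set C1 := ∑ k ∈ Finset.range (2 * m + 1), A k * S (p + n - k) with hC1
  have hC10 : 0 ≤ C1 := Finset.sum_nonneg fun k _ => mul_nonneg (hA0 k) (hS0 _)
  set C2 := (2 * A (2 * m) + A (2 * m + 1)) * S (2 * γ - α) with hC2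
  have hC20 : 0 ≤ C2 := mul_nonneg (by linarith [hA0 (2 * m), hA0 (2 * m + 1)]) (hS0 _)
  refine ⟨C1 + C2, by positivity, fun w Mw hw hM f hf => ?_⟩
  have hMw : 0 ≤ Mw := (abs_nonneg _).trans (hM 0)
  have hr : ∀ j : ℕ, 0 < (2 : ℝ) ^ (-(j : ℤ)) := fun j => by positivity
  have hT : ∀ (j N : ℕ), ContDiff ℝ N (cv w (sc ψ p ((2 : ℝ) ^ (-(j : ℤ))))) := fun j N =>
    cv_contDiff w hw N (sc_contDiff hψ p _) (sc_compact hc p (hr j))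
  have hb : ∀ (k j : ℕ) (x), ‖iteratedFDeriv ℝ k (cv w (sc ψ p ((2 : ℝ) ^ (-(j : ℤ))))) x‖ ≤
      A k * ((2 : ℝ) ^ (-(j : ℤ))) ^ (p + n - k) * Mw := fun k j x =>
    (cv_norm_iter w hw k (sc_contDiff hψ p _) (sc_compact hc p (hr j)) x).trans
      (hA k w Mw hw hM _ (hr j) x).1
  have hq : ∀ k : ℕ, k ≤ 2 * m → 0 < p + n - k := by
    intro k hk
    have : (k : ℝ) ≤ 2 * m := by exact_mod_cast hk
    linarith
  have hsum : ∀ k : ℕ, k ≤ 2 * m → Summable fun j : ℕ =>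
      A k * ((2 : ℝ) ^ (-(j : ℤ))) ^ (p + n - k) * Mw := fun k hk =>
    ((summable_near (hq k hk)).mul_left _).mul_right _
  have hv : ∀ k : ℕ, (k : ℕ∞) ≤ (2 * m : ℕ) → Summable fun j : ℕ =>
      A k * ((2 : ℝ) ^ (-(j : ℤ))) ^ (p + n - k) * Mw := fun k hk =>
    hsum k (by exact_mod_cast hk)
  have hD : ∀ k ≤ 2 * m, ∀ x, iteratedFDeriv ℝ k f x =
      ∑' j : ℕ, iteratedFDeriv ℝ k (cv w (sc ψ p ((2 : ℝ) ^ (-(j : ℤ))))) x := by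
    intro k hk x
    rw [hf]
    exact iteratedFDeriv_tsum_apply (N := ((2 * m : ℕ) : ℕ∞)) (fun j => hT j _) hv
      (fun k j x _ => hb k j x) (by exact_mod_cast hk) x
  refine ⟨?_, ?_, ?_⟩
  · rw [hf]
    exact contDiff_tsum (N := ((2 * m : ℕ) : ℕ∞)) (fun j => hT j _) hv (fun k j x _ => hb k j x)
  · intro k hk x
    rw [hD k hk]
    have h1 := tsum_of_norm_bounded (hsum k hk).hasSum (fun j => hb k j x)
    rw [tsum_mul_right, tsum_mul_left] at h1
    have h2 : A k * S (p + n - k) ≤ C1 :=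
      Finset.single_le_sum (f := fun k : ℕ => A k * S (p + n - k))
        (fun k _ => mul_nonneg (hA0 k) (hS0 _)) (Finset.mem_range.2 (by omega))
    exact h1.trans (mul_le_mul_of_nonneg_right (by linarith) hMw)
  · intro x y
    rw [hD _ le_rfl, hD _ le_rfl, ← Summable.tsum_sub
      (Summable.of_norm_bounded (hsum _ le_rfl) (fun j => hb _ j x))
      (Summable.of_norm_bounded (hsum _ le_rfl) (fun j => hb _ j y))]
    have key : ∀ j : ℕ, ‖iteratedFDeriv ℝ (2 * m) (cv w (sc ψ p ((2 : ℝ) ^ (-(j : ℤ))))) x -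
        iteratedFDeriv ℝ (2 * m) (cv w (sc ψ p ((2 : ℝ) ^ (-(j : ℤ))))) y‖ ≤
        (2 * A (2 * m) + A (2 * m + 1)) * ((2 : ℝ) ^ (-(j : ℤ))) ^ (2 * γ - α) *
          (Mw * ‖x - y‖ ^ α) := by
      intro j
      have hrj := hr j
      have hx := hb (2 * m) j x
      have hy := hb (2 * m) j y
      have hl := iter_lip (hT j _) (hb (2 * m + 1) j) x y
      have e1 : p + n - ((2 * m : ℕ) : ℝ) = 2 * γ := by push_cast; linarith
      have e2 : p + n - ((2 * m + 1 : ℕ) : ℝ) = 2 * γ - 1 := by push_cast; linarith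
      rw [e1] at hx hy
      rw [e2] at hl
      refine holder_real (hA0 _) (hA0 _) hMw hrj (norm_nonneg _) hα hα1 ?_ hl
      refine (norm_sub_le _ _).trans ?_
      linarith
    have h1 := tsum_of_norm_bounded
      (((summable_near (sub_pos.2 hαγ)).mul_left _).mul_right _).hasSum key
    rw [tsum_mul_right, tsum_mul_left] at h1
    refine h1.trans ?_
    rw [mul_assoc (C1 + C2)]
    exact mul_le_mul_of_nonneg_right (le_add_of_nonneg_left hC10) (by positivity)

theorem far_part {ψ : EuclideanSpace ℝ (Fin n) → ℝ} (hψ : ∀ k : ℕ, ContDiff ℝ k ψ)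
    (hc : HasCompactSupport ψ) (p : ℝ) (hp0 : p < 0) (N : ℕ) (hp : p + n - N < 0) :
    ∃ C : ℝ, 0 ≤ C ∧ ∀ (w : EuclideanSpace ℝ (Fin n) → ℝ) (Mw : ℝ), Integrable w →
      (∀ x, |w x| ≤ Mw) → ∀ f : EuclideanSpace ℝ (Fin n) → ℝ,
      (f = fun x => ∑' j : ℕ, cv w (sc ψ p ((2 : ℝ) ^ (-(-((j : ℤ) + 1))))) x) →
      (∀ k : ℕ, ContDiff ℝ k f) ∧ (∀ k : ℕ, ∃ b, ∀ x, ‖iteratedFDeriv ℝ k f x‖ ≤ b) ∧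
      ∀ x, ‖iteratedFDeriv ℝ N f x‖ ≤ C * Mw := by
  choose A hA0 hA using fun k => piece_bounds hψ hc p k
  set S : ℝ → ℝ := fun q => ∑' j : ℕ, ((2 : ℝ) ^ (-(-((j : ℤ) + 1)))) ^ q with hS
  have hS0 : ∀ q, 0 ≤ S q := fun q => tsum_nonneg fun j => by positivity
  refine ⟨A N * S (p + n - N), mul_nonneg (hA0 _) (hS0 _), fun w Mw hw hM f hf => ?_⟩
  have hr : ∀ j : ℕ, 0 < (2 : ℝ) ^ (-(-((j : ℤ) + 1))) := fun j => by positivity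
  have hT : ∀ (j N : ℕ), ContDiff ℝ N (cv w (sc ψ p ((2 : ℝ) ^ (-(-((j : ℤ) + 1)))))) :=
    fun j N => cv_contDiff w hw N (sc_contDiff hψ p _) (sc_compact hc p (hr j))
  have hb1 : ∀ (k j : ℕ) (x),
      ‖iteratedFDeriv ℝ k (cv w (sc ψ p ((2 : ℝ) ^ (-(-((j : ℤ) + 1)))))) x‖ ≤
      A k * ((2 : ℝ) ^ (-(-((j : ℤ) + 1)))) ^ (p + n - k) * Mw := fun k j x =>
    (cv_norm_iter w hw k (sc_contDiff hψ p _) (sc_compact hc p (hr j)) x).trans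
      (hA k w Mw hw hM _ (hr j) x).1
  have hb2 : ∀ (k j : ℕ) (x),
      ‖iteratedFDeriv ℝ k (cv w (sc ψ p ((2 : ℝ) ^ (-(-((j : ℤ) + 1)))))) x‖ ≤
      A k * ((2 : ℝ) ^ (-(-((j : ℤ) + 1)))) ^ (p - k) * ∫ y, |w y| := fun k j x =>
    (cv_norm_iter w hw k (sc_contDiff hψ p _) (sc_compact hc p (hr j)) x).trans
      (hA k w Mw hw hM _ (hr j) x).2
  have hsum : ∀ k : ℕ, Summable fun j : ℕ =>
      A k * ((2 : ℝ) ^ (-(-((j : ℤ) + 1)))) ^ (p - k) * ∫ y, |w y| := fun k =>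
    ((summable_far (by have : (0 : ℝ) ≤ k := k.cast_nonneg
                       linarith)).mul_left _).mul_right _
  have hD : ∀ k x, iteratedFDeriv ℝ k f x =
      ∑' j : ℕ, iteratedFDeriv ℝ k (cv w (sc ψ p ((2 : ℝ) ^ (-(-((j : ℤ) + 1)))))) x := by
    intro k x
    rw [hf]
    exact iteratedFDeriv_tsum_apply (N := (k : ℕ∞)) (fun j => hT j _) (fun k _ => hsum k)
      (fun k j x _ => hb2 k j x) le_rfl x
  refine ⟨fun k => ?_, fun k => ?_, fun x => ?_⟩
  · rw [hf]
    exact contDiff_tsum (N := (k : ℕ∞)) (fun j => hT j _) (fun k _ => hsum k)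
      (fun k j x _ => hb2 k j x)
  · refine ⟨∑' j : ℕ, A k * ((2 : ℝ) ^ (-(-((j : ℤ) + 1)))) ^ (p - k) * ∫ y, |w y|, fun x => ?_⟩
    rw [hD k]
    exact tsum_of_norm_bounded (hsum k).hasSum (fun j => hb2 k j x)
  · rw [hD N]
    have h1 := tsum_of_norm_bounded
      (((summable_far hp).mul_left (A N)).mul_right Mw).hasSum (fun j => hb1 N j x)
    rwa [tsum_mul_right, tsum_mul_left] at h1

theorem potential_split {φ : EuclideanSpace ℝ (Fin n) → ℝ} (hφ : ∀ k : ℕ, ContDiff ℝ k φ)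
    (hc : HasCompactSupport φ)
    (h1 : ∀ x, ‖x‖ ≤ 1 → φ x = 1) (h2 : ∀ x, 2 ≤ ‖x‖ → φ x = 0)
    (h3 : ∀ x, 0 ≤ φ x) (h4 : ∀ x, φ x ≤ 1) {p : ℝ} (hp : p < 0) (hpn : 0 < p + n)
    (w : EuclideanSpace ℝ (Fin n) → ℝ) (Mw : ℝ) (hw : Integrable w)
    (hM : ∀ x, |w x| ≤ Mw) (x : EuclideanSpace ℝ (Fin n)) :
    ∫ y, w y * ‖x - y‖ ^ p =
      (∑' j : ℕ, cv w (sc (psi φ p) p ((2 : ℝ) ^ (-(j : ℤ)))) x) +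
      ∑' j : ℕ, cv w (sc (psi φ p) p ((2 : ℝ) ^ (-(-((j : ℤ) + 1))))) x := by
  have hψ := psi_contDiff hφ h1 p
  have hψc := psi_compact hc p
  obtain ⟨A, hA0, hA⟩ := piece_bounds hψ hψc p 0
  have hr : ∀ j : ℤ, 0 < (2 : ℝ) ^ j := fun j => by positivity
  have hint : ∀ j : ℤ, Integrable fun y => w y • sc (psi φ p) p ((2 : ℝ) ^ (-j)) (x - y) := fun j =>
    cv_integrand hw (sc_contDiff hψ p _ 0).continuous (sc_compact hψc p (hr _)) x
  have hnorm : ∀ j : ℤ, ∫ y, ‖w y • sc (psi φ p) p ((2 : ℝ) ^ (-j)) (x - y)‖ =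
      ∫ y, |w y| * ‖iteratedFDeriv ℝ 0 (sc (psi φ p) p ((2 : ℝ) ^ (-j))) (x - y)‖ := by
    intro j
    simp
  have hnn : ∀ j : ℤ, 0 ≤ ∫ y, ‖w y • sc (psi φ p) p ((2 : ℝ) ^ (-j)) (x - y)‖ := fun j =>
    integral_nonneg fun _ => norm_nonneg _
  have hs : Summable fun j : ℤ => ∫ y, ‖w y • sc (psi φ p) p ((2 : ℝ) ^ (-j)) (x - y)‖ := by
    refine Summable.of_nat_of_neg_add_one ?_ ?_
    · refine Summable.of_nonneg_of_le (fun j => hnn _) (fun j => ?_)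
        (((summable_near (by simpa using hpn : 0 < p + n - (0 : ℕ))).mul_left A).mul_right Mw)
      rw [hnorm]
      exact (hA w Mw hw hM _ (hr _) x).1
    · refine Summable.of_nonneg_of_le (fun j => hnn _) (fun j => ?_)
        (((summable_far (by simpa using hp : p - (0 : ℕ) < 0)).mul_left A).mul_right (∫ y, |w y|))
      rw [hnorm]
      exact (hA w Mw hw hM _ (hr _) x).2
  have H := hasSum_integral_of_summable_integral_norm hint hs
  have e : ∀ y, ∑' j : ℤ, w y • sc (psi φ p) p ((2 : ℝ) ^ (-j)) (x - y) = w y * ‖x - y‖ ^ p :=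
    fun y => ((hasSum_kernel (hφ 0).continuous h1 h2 h3 h4 hp.ne (x - y)).mul_left (w y)).tsum_eq
  simp_rw [e] at H
  rw [← H.tsum_eq]
  have hsj := H.summable
  exact tsum_of_nat_of_neg_add_one (hsj.comp_injective Nat.cast_injective)
    (hsj.comp_injective (i := fun j : ℕ => -((j : ℤ) + 1)) (fun a b h => by simpa using h))

end parts

end Riesz

/-- Schauder-type estimate for Riesz potentials (Theorem 5.2(ii)): if
`v = c_{n,s} ∫ w(y)|x-y|^{2s-n} dy` with `w ∈ L^∞ ∩ L¹`, `v ∈ L^∞`, `s = m + γ`,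
`0 < 2γ ≤ 1`, then for every `α ∈ (0,2γ)` there is `C = C(n,s,α)` such that `v` is
`C^{2m}` with all derivatives up to order `2m` bounded by `C(‖v‖_∞ + ‖w‖_∞)` and the
order-`2m` derivative globally `α`-Hölder with the same constant. -/
theorem stmt8 (n : ℕ) (hn : 1 ≤ n) (s γ α : ℝ) (m : ℕ)
    (hs : 0 < s) (hsn : 2 * s < (n : ℝ)) (hsm : s = (m : ℝ) + γ)
    (hγ0 : 0 ≤ γ) (hγ1 : γ < 1) (hγpos : 0 < 2 * γ) (hγhalf : 2 * γ ≤ 1)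
    (hα : 0 < α) (hαγ : α < 2 * γ) :
    ∃ C : ℝ, 0 < C ∧
      ∀ (w v : EuclideanSpace ℝ (Fin n) → ℝ) (Mw Mv : ℝ),
        (∀ x, |w x| ≤ Mw) → Integrable w →
        (∀ x, v x =
          (Real.Gamma ((n : ℝ) / 2 - s) /
              (Real.pi ^ ((n : ℝ) / 2) * 2 ^ (2 * s) * Real.Gamma s)) *
            ∫ y, w y * ‖x - y‖ ^ (2 * s - (n : ℝ))) →
        (∀ x, |v x| ≤ Mv) →
        ContDiff ℝ (2 * m) v ∧
        (∀ i ≤ 2 * m, ∀ x, ‖iteratedFDeriv ℝ i v x‖ ≤ C * (Mv + Mw)) ∧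
        (∀ x y : EuclideanSpace ℝ (Fin n),
          ‖iteratedFDeriv ℝ (2 * m) v x - iteratedFDeriv ℝ (2 * m) v y‖ ≤
            C * (Mv + Mw) * ‖x - y‖ ^ α) := by
  set c : ℝ := Real.Gamma ((n : ℝ) / 2 - s) /
              (Real.pi ^ ((n : ℝ) / 2) * 2 ^ (2 * s) * Real.Gamma s) with hcdef
  have hc : 0 < c := by
    have g1 : 0 < Real.Gamma ((n : ℝ) / 2 - s) := Real.Gamma_pos_of_pos (by linarith)
    have g2 : 0 < Real.Gamma s := Real.Gamma_pos_of_pos hs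
    have := Real.pi_pos
    positivity
  clear_value c
  obtain ⟨φ, hφ, hφc, h1, h2, h3, h4⟩ := Riesz.exists_cutoff (n := n)
  set p : ℝ := 2 * s - n with hp
  have hp0 : p < 0 := by linarith
  have hψ := Riesz.psi_contDiff hφ h1 p
  have hψc := Riesz.psi_compact hφc p
  have hα1 : α < 1 := by linarith
  obtain ⟨C1, hC1, near⟩ := Riesz.near_part hψ hψc p γ α m (by rw [hp, hsm]; ring) hα hα1 hαγ
  obtain ⟨C2, hC2, far⟩ := Riesz.far_part hψ hψc p hp0 (2 * m + 2)
    (by push_cast; rw [hp, hsm]; linarith)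
  obtain ⟨C3, hC3, lan⟩ := Riesz.landau (E := EuclideanSpace ℝ (Fin n)) (2 * m + 2)
  -- bound for all derivatives of the far part
  set D := C3 * (c⁻¹ + C1) + C2 with hD
  have hD0 : 0 ≤ D := by positivity
  refine ⟨c * (C1 + 2 * D) + 1, by positivity, fun w v Mw Mv hM hw hv hMv => ?_⟩
  have hMw0 : 0 ≤ Mw := (abs_nonneg _).trans (hM 0)
  have hMv0 : 0 ≤ Mv := (abs_nonneg _).trans (hMv 0)
  obtain ⟨f, hf⟩ : ∃ f : EuclideanSpace ℝ (Fin n) → ℝ, f = fun x =>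
    ∑' j : ℕ, Riesz.cv w (Riesz.sc (Riesz.psi φ p) p ((2 : ℝ) ^ (-(j : ℤ)))) x := ⟨_, rfl⟩
  obtain ⟨g, hg⟩ : ∃ g : EuclideanSpace ℝ (Fin n) → ℝ, g = fun x =>
    ∑' j : ℕ, Riesz.cv w (Riesz.sc (Riesz.psi φ p) p ((2 : ℝ) ^ (-(-((j : ℤ) + 1))))) x := ⟨_, rfl⟩
  obtain ⟨f1, f2, f3⟩ := near w Mw hw hM f hf
  obtain ⟨g1, g2, g3⟩ := far w Mw hw hM g hg
  have hvfg : v = fun x => c • (f x + g x) := by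
    funext x
    rw [hv x, Riesz.potential_split hφ hφc h1 h2 h3 h4 hp0 (by rw [hp]; linarith) w Mw hw hM x,
      hf, hg, smul_eq_mul]
  set M := Mv + Mw with hMdef
  have hM0 : 0 ≤ M := by positivity
  have hwM : Mw ≤ M := by linarith
  have hvM : Mv ≤ M := by linarith
  have hgb : ∀ k ≤ 2 * m + 2, ∀ x, ‖iteratedFDeriv ℝ k g x‖ ≤ D * M := by
    intro k hk x
    have hg0 : ∀ x, |g x| ≤ (c⁻¹ + C1) * M := by
      intro x
      have e : g x = c⁻¹ * v x - f x := by
        rw [congrFun hvfg x]; simp only [smul_eq_mul]; field_simp; ring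
      have b1 : |f x| ≤ C1 * Mw := by simpa using f2 0 (Nat.zero_le _) x
      have b2 : |c⁻¹ * v x| ≤ c⁻¹ * Mv := by
        rw [abs_mul, abs_of_pos (inv_pos.2 hc)]
        exact mul_le_mul_of_nonneg_left (hMv x) (inv_pos.2 hc).le
      rw [e]
      have b3 := abs_sub (c⁻¹ * v x) (f x)
      have b4 := mul_le_mul_of_nonneg_left hwM hC1
      have b5 := mul_le_mul_of_nonneg_left hvM (inv_pos.2 hc).le
      linarith
    have := lan g g1 g2 _ (C2 * M) hg0
      (fun x => (g3 x).trans (mul_le_mul_of_nonneg_left hwM hC2)) k hk x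
    refine this.trans (le_of_eq ?_)
    rw [hD]; ring
  have hfM : C1 * Mw ≤ C1 * M := mul_le_mul_of_nonneg_left hwM hC1
  have hDv : ∀ k ≤ 2 * m, ∀ x, iteratedFDeriv ℝ k v x =
      c • (iteratedFDeriv ℝ k f x + iteratedFDeriv ℝ k g x) := by
    intro k hk x
    have q1 : ContDiff ℝ k f := f1.of_le (by exact_mod_cast hk)
    have q2 : ContDiff ℝ k g := g1 k
    rw [hvfg, iteratedFDeriv_const_smul_apply' (q1.add q2).contDiffAt]
    congr 1
    exact iteratedFDeriv_add_apply q1.contDiffAt q2.contDiffAt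
  have hcM : 0 ≤ c * D * M := by positivity
  refine ⟨?_, ?_, ?_⟩
  · rw [hvfg]
    have : ContDiff ℝ (2 * m : ℕ) fun x => c • (f x + g x) := (f1.add (g1 _)).const_smul c
    exact_mod_cast this
  · intro k hk x
    rw [hDv k hk, norm_smul, Real.norm_of_nonneg hc.le]
    have q := (norm_add_le (iteratedFDeriv ℝ k f x) (iteratedFDeriv ℝ k g x)).trans
      (add_le_add ((f2 k hk x).trans hfM) (hgb k (by omega) x))
    have := mul_le_mul_of_nonneg_left q hc.le
    nlinarith
  · intro x y
    have hd : 0 ≤ ‖x - y‖ ^ α := by positivity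
    have gh : ‖iteratedFDeriv ℝ (2 * m) g x - iteratedFDeriv ℝ (2 * m) g y‖ ≤
        2 * D * M * ‖x - y‖ ^ α := by
      have hDM : 0 ≤ D * M := by positivity
      rcases le_total ‖x - y‖ 1 with h | h
      · have l := Riesz.iter_lip (g1 _) (hgb (2 * m + 1) (by omega)) x y
        have : ‖x - y‖ ≤ ‖x - y‖ ^ α := by
          rcases (norm_nonneg (x - y)).eq_or_lt with h0 | h0
          · rw [← h0]; positivity
          · simpa using Real.rpow_le_rpow_of_exponent_ge h0 h hα1.le
        nlinarith [mul_le_mul_of_nonneg_left this hDM, mul_nonneg hDM hd]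
      · have l := (norm_sub_le (iteratedFDeriv ℝ (2 * m) g x) (iteratedFDeriv ℝ (2 * m) g y)).trans
          (add_le_add (hgb (2 * m) (by omega) x) (hgb (2 * m) (by omega) y))
        have : 1 ≤ ‖x - y‖ ^ α := Real.one_le_rpow h hα.le
        nlinarith [mul_le_mul_of_nonneg_left this hDM]
    rw [hDv _ le_rfl, hDv _ le_rfl, ← smul_sub, norm_smul, Real.norm_of_nonneg hc.le,
      add_sub_add_comm]
    have q := (norm_add_le (iteratedFDeriv ℝ (2 * m) f x - iteratedFDeriv ℝ (2 * m) f y)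
      (iteratedFDeriv ℝ (2 * m) g x - iteratedFDeriv ℝ (2 * m) g y)).trans
      (add_le_add ((f3 x y).trans (mul_le_mul_of_nonneg_right hfM hd)) gh)
    have := mul_le_mul_of_nonneg_left q hc.le
    nlinarith [mul_nonneg hM0 hd]
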